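/- Let g : [0,1] → (−∞,∞] be defined by g(p) = 1/(1−p) for p ∈ [0,1), and g(1) = ∞. Then ES^g(X) < ∞ for every X ∈ L^1; that is, an adjusted Expected Shortfall with a risk profile in G_VaR can be finite on all of L^1. In particular, ES^g(X) ≤ max{ES_q(X), 0} for any q ∈ (0,1) such that sup_{p∈[q,1]} ∫_p^1 VaR_r(X) dr < 1. -/

import Mathlib

open MeasureTheory Set Filter

variable {Ω : Type*} [MeasurableSpace Ω]

/-- An atomless probability space: every set of positive measure has a subset of
strictly smaller positive measure. -/
def Atomless (μ : Measure Ω) : Prop :=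
  ∀ A : Set Ω, MeasurableSet A → 0 < μ A →
    ∃ B : Set Ω, MeasurableSet B ∧ B ⊆ A ∧ 0 < μ B ∧ μ B < μ A

/-- Value at Risk at level `p`: the left `p`-quantile for `p ∈ (0,1]`, the essential
infimum for `p = 0`.  Values are extended reals. -/
noncomputable def VaR (μ : Measure Ω) (X : Ω → ℝ) (p : ℝ) : EReal :=
  if p = 0 then essInf (fun ω => (X ω : EReal)) μ
  else sInf ((fun x : ℝ => (x : EReal)) '' {x : ℝ | ENNReal.ofReal p ≤ μ {ω | X ω ≤ x}})

/-- Real-valued version of the left `p`-quantile, used as the integrand of ES. -/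
noncomputable def VaRr (μ : Measure Ω) (X : Ω → ℝ) (p : ℝ) : ℝ :=
  sInf {x : ℝ | ENNReal.ofReal p ≤ μ {ω | X ω ≤ x}}

/-- Expected Shortfall at level `p`: `(1/(1-p)) ∫_p^1 VaR_q(X) dq` for `p ∈ [0,1)`,
the essential supremum for `p = 1`. -/
noncomputable def ES (μ : Measure Ω) (X : Ω → ℝ) (p : ℝ) : EReal :=
  if p = 1 then essSup (fun ω => (X ω : EReal)) μ
  else (((1 - p)⁻¹ * ∫ q in Set.Ioo p 1, VaRr μ X q : ℝ) : EReal)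

/-- The `g`-adjusted Expected Shortfall, `sup_{p ∈ [0,1]} (ES_p(X) - g(p))`.
Note that in `EReal` one has `⊤ - ⊤ = ⊥`, matching the convention `∞ - ∞ = -∞`. -/
noncomputable def adjES (μ : Measure Ω) (g : ℝ → EReal) (X : Ω → ℝ) : EReal :=
  ⨆ p ∈ Set.Icc (0:ℝ) 1, (ES μ X p - g p)

/-- The class `𝒢` of risk profiles: increasing functions `[0,1] → (-∞,∞]` that are
not identically `∞`. -/
def IsRiskProfile (g : ℝ → EReal) : Prop :=
  MonotoneOn g (Set.Icc (0:ℝ) 1) ∧ (∀ p ∈ Set.Icc (0:ℝ) 1, g p ≠ ⊥) ∧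
    ∃ p ∈ Set.Icc (0:ℝ) 1, g p ≠ ⊤

/-- Second-order stochastic dominance: `SSD μ X Y` means `X ≥_SSD Y`, i.e. every
risk-averse agent prefers `X` to `Y` (positive values are losses). -/
def SSD (μ : Measure Ω) (X Y : Ω → ℝ) : Prop :=
  ∀ u : ℝ → ℝ, Monotone u → ConcaveOn ℝ Set.univ u →
    ∫ ω, u (-(Y ω)) ∂μ ≤ ∫ ω, u (-(X ω)) ∂μ

/-- The inf-convolution of the functionals `ρ_1, …, ρ_n`. -/
noncomputable def infConv (μ : Measure Ω) {n : ℕ} (ρ : Fin n → ((Ω → ℝ) → EReal))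
    (X : Ω → ℝ) : EReal :=
  ⨅ (Y : Fin n → Ω → ℝ) (_ : (∀ i, Integrable (Y i) μ) ∧ ∀ ω, (∑ i, Y i ω) = X ω),
    ∑ i, ρ i (Y i)

/-- The class `𝒢_VaR`: risk profiles finite on `[0,1)`, left-continuous on `[0,1]`
and right-continuous at `0`. -/
def GVaRProfile (g : ℝ → EReal) : Prop :=
  IsRiskProfile g ∧ (∀ p ∈ Set.Ico (0:ℝ) 1, g p ≠ ⊤) ∧
    (∀ p ∈ Set.Ioc (0:ℝ) 1, Filter.Tendsto g (nhdsWithin p (Set.Ico 0 p)) (nhds (g p))) ∧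
    Filter.Tendsto g (nhdsWithin 0 (Set.Ioc 0 1)) (nhds (g 0))

/-- The class `𝒢_ES`: profiles in `𝒢_VaR` such that `h_g(p) = (1-p)g(p)` is concave
on `(0,1)` and left-continuous at `1` (with `h_g(1) = 0` by the convention `0·∞ = 0`). -/
def GESProfile (g : ℝ → EReal) : Prop :=
  GVaRProfile g ∧ ConcaveOn ℝ (Set.Ioo (0:ℝ) 1) (fun p => (1 - p) * (g p).toReal) ∧
    Filter.Tendsto (fun p => (1 - p) * (g p).toReal) (nhdsWithin 1 (Set.Ico (0:ℝ) 1)) (nhds 0)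

lemma VaRr_le_iff (μ : Measure Ω) [IsProbabilityMeasure μ] (X : Ω → ℝ) (hX : AEMeasurable X μ)
    {p : ℝ} (hp : p ∈ Set.Ioo (0:ℝ) 1) (x : ℝ) :
    VaRr μ X p ≤ x ↔ p ≤ ProbabilityTheory.cdf (μ.map X) x := by
  have : IsProbabilityMeasure (μ.map X) := Measure.isProbabilityMeasure_map hX
  set F := ProbabilityTheory.cdf (μ.map X) with hF
  have hset : {x : ℝ | ENNReal.ofReal p ≤ μ {ω | X ω ≤ x}} = {x : ℝ | p ≤ F x} := by
    ext y
    have h1 : μ {ω | X ω ≤ y} = ENNReal.ofReal (F y) := by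
      rw [hF, ProbabilityTheory.ofReal_cdf, Measure.map_apply_of_aemeasurable hX measurableSet_Iic]
      rfl
    simp only [Set.mem_setOf_eq, h1]
    rw [ENNReal.ofReal_le_ofReal_iff (ProbabilityTheory.cdf_nonneg _ _)]
  unfold VaRr
  rw [hset]
  have hbdd : BddBelow {x : ℝ | p ≤ F x} := by
    have := (ProbabilityTheory.tendsto_cdf_atBot (μ.map X)).eventually (gt_mem_nhds hp.1)
    obtain ⟨a, ha⟩ := this.exists
    refine ⟨a, fun y hy => ?_⟩
    by_contra h
    have h2 := F.mono (not_le.1 h).le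
    have h3 : p ≤ F y := hy
    linarith
  have hne : {x : ℝ | p ≤ F x}.Nonempty := by
    have := (ProbabilityTheory.tendsto_cdf_atTop (μ.map X)).eventually (lt_mem_nhds hp.2)
    obtain ⟨a, ha⟩ := this.exists
    exact ⟨a, ha.le⟩
  constructor
  · intro h
    have hr : Tendsto F (nhdsWithin x (Set.Ioi x)) (nhds (F x)) :=
      (F.right_continuous x).mono_left (nhdsWithin_mono _ Set.Ioi_subset_Ici_self)
    refine ge_of_tendsto hr ?_
    filter_upwards [self_mem_nhdsWithin] with y hy
    obtain ⟨z, hz, hzy⟩ := exists_lt_of_csInf_lt hne (lt_of_le_of_lt h hy)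
    exact le_trans hz (F.mono hzy.le)
  · intro h
    exact csInf_le hbdd h

lemma VaRr_mono (μ : Measure Ω) [IsProbabilityMeasure μ] (X : Ω → ℝ) (hX : AEMeasurable X μ) :
    MonotoneOn (VaRr μ X) (Set.Ioo 0 1) := by
  intro p hp q hq hpq
  rw [VaRr_le_iff μ X hX hp]
  exact hpq.trans ((VaRr_le_iff μ X hX hq _).1 le_rfl)

lemma VaRr_map (μ : Measure Ω) [IsProbabilityMeasure μ] (X : Ω → ℝ) (hX : AEMeasurable X μ) :
    (volume.restrict (Set.Ioo (0:ℝ) 1)).map (VaRr μ X) = μ.map X := by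
  have : IsProbabilityMeasure (μ.map X) := Measure.isProbabilityMeasure_map hX
  have hm : AEMeasurable (VaRr μ X) (volume.restrict (Set.Ioo (0:ℝ) 1)) :=
    aemeasurable_restrict_of_monotoneOn measurableSet_Ioo (VaRr_mono μ X hX)
  have : IsFiniteMeasure ((volume.restrict (Set.Ioo (0:ℝ) 1)).map (VaRr μ X)) := inferInstance
  refine Measure.ext_of_Iic _ _ fun x => ?_
  rw [Measure.map_apply_of_aemeasurable hm measurableSet_Iic, ← ProbabilityTheory.ofReal_cdf,
    Measure.restrict_apply₀' measurableSet_Ioo.nullMeasurableSet]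
  set c := ProbabilityTheory.cdf (μ.map X) x
  have hc1 : c ≤ 1 := ProbabilityTheory.cdf_le_one _ _
  have h1 : VaRr μ X ⁻¹' Set.Iic x ∩ Set.Ioo 0 1 = Set.Iic c ∩ Set.Ioo 0 1 := by
    ext p
    simp only [Set.mem_inter_iff, Set.mem_preimage, Set.mem_Iic]
    exact and_congr_left fun hp => VaRr_le_iff μ X hX hp x
  rw [h1]
  apply le_antisymm
  · calc volume (Set.Iic c ∩ Set.Ioo 0 1) ≤ volume (Set.Ioc 0 c) :=
          measure_mono fun p hp => ⟨hp.2.1, hp.1⟩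
      _ = _ := by simp
  · calc ENNReal.ofReal c = volume (Set.Ioo 0 c) := by simp
      _ ≤ volume (Set.Iic c ∩ Set.Ioo 0 1) := measure_mono fun p hp => ⟨hp.2.le, hp.1, hp.2.trans_le hc1⟩

lemma VaRr_integrable (μ : Measure Ω) [IsProbabilityMeasure μ] (X : Ω → ℝ) (hX : Integrable X μ) :
    IntegrableOn (VaRr μ X) (Set.Ioo 0 1) := by
  have hm : AEMeasurable (VaRr μ X) (volume.restrict (Set.Ioo (0:ℝ) 1)) :=
    aemeasurable_restrict_of_monotoneOn measurableSet_Ioo (VaRr_mono μ X hX.aemeasurable)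
  have h1 : Integrable (id : ℝ → ℝ) (μ.map X) :=
    (integrable_map_measure aestronglyMeasurable_id hX.aemeasurable).2 hX
  rw [← VaRr_map μ X hX.aemeasurable] at h1
  exact (integrable_map_measure aestronglyMeasurable_id hm).1 h1

lemma ES_mono_aux (μ : Measure Ω) [IsProbabilityMeasure μ] (X : Ω → ℝ) (hX : Integrable X μ)
    {p q : ℝ} (hp : 0 ≤ p) (hpq : p < q) (hq : q < 1) :
    (1 - p)⁻¹ * ∫ r in Set.Ioo p 1, VaRr μ X r ≤ (1 - q)⁻¹ * ∫ r in Set.Ioo q 1, VaRr μ X r := by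
  have hi := VaRr_integrable μ X hX
  have hmono := VaRr_mono μ X hX.aemeasurable
  have hqm : q ∈ Set.Ioo (0:ℝ) 1 := ⟨hp.trans_lt hpq, hq⟩
  have hi1 : IntegrableOn (VaRr μ X) (Set.Ioc p q) :=
    hi.mono_set fun r hr => ⟨hp.trans_lt hr.1, hr.2.trans_lt hq⟩
  have hi2 : IntegrableOn (VaRr μ X) (Set.Ioo q 1) :=
    hi.mono_set fun r hr => ⟨hqm.1.trans hr.1, hr.2⟩
  have hsplit : ∫ r in Set.Ioo p 1, VaRr μ X r
      = (∫ r in Set.Ioc p q, VaRr μ X r) + ∫ r in Set.Ioo q 1, VaRr μ X r := by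
    rw [← Set.Ioc_union_Ioo_eq_Ioo hpq.le hq]
    refine setIntegral_union ?_ measurableSet_Ioo hi1 hi2
    exact Set.disjoint_left.2 fun r h1 h2 => absurd h1.2 (not_le.2 h2.1)
  set v := VaRr μ X q
  have hA : ∫ r in Set.Ioc p q, VaRr μ X r ≤ (q - p) * v := by
    have : ∫ r in Set.Ioc p q, VaRr μ X r ≤ ∫ r in Set.Ioc p q, v :=
      setIntegral_mono_on hi1 (by simp) measurableSet_Ioc
        fun r hr => hmono ⟨hp.trans_lt hr.1, hr.2.trans_lt hq⟩ hqm hr.2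
    simpa [hpq.le] using this
  have hB : (1 - q) * v ≤ ∫ r in Set.Ioo q 1, VaRr μ X r := by
    have : ∫ r in Set.Ioo q 1, v ≤ ∫ r in Set.Ioo q 1, VaRr μ X r :=
      setIntegral_mono_on (by simp) hi2 measurableSet_Ioo
        fun r hr => hmono hqm ⟨hqm.1.trans hr.1, hr.2⟩ hr.1.le
    simpa [hq.le] using this
  rw [hsplit, inv_mul_le_iff₀ (by linarith), ← mul_assoc, mul_comm (1 - p), mul_assoc,
    le_inv_mul_iff₀ (by linarith)]
  nlinarith [mul_le_mul_of_nonneg_left hA (sub_nonneg.2 hq.le),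
    mul_le_mul_of_nonneg_left hB (sub_nonneg.2 hpq.le)]

lemma adjES_le_aux (μ : Measure Ω) [IsProbabilityMeasure μ]
    (g : ℝ → EReal) (hgdef : ∀ p ∈ Set.Ico (0:ℝ) 1, g p = (((1 - p)⁻¹ : ℝ) : EReal))
    (hg1 : g 1 = ⊤) (X : Ω → ℝ) (hX : Integrable X μ) (q : ℝ) (hq : q ∈ Set.Ioo (0:ℝ) 1)
    (h : ∀ p ∈ Set.Ico q 1, ∫ r in Set.Ioo p 1, VaRr μ X r ≤ 1) :
    adjES μ g X ≤ max (ES μ X q) 0 := by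
  refine iSup₂_le fun p hp => ?_
  rcases hp.2.eq_or_lt with rfl | hp1
  · rw [hg1, sub_eq_add_neg, EReal.neg_top, EReal.add_bot]
    exact bot_le
  have hpos : 0 < (1 - p)⁻¹ := inv_pos.2 (by linarith)
  rw [hgdef p ⟨hp.1, hp1⟩, ES, ES, if_neg hp1.ne, if_neg hq.2.ne, ← EReal.coe_sub]
  by_cases hpq : p < q
  · refine le_max_of_le_left (EReal.coe_le_coe_iff.2 ?_)
    linarith [ES_mono_aux μ X hX hp.1 hpq hq.2]
  · refine le_max_of_le_right ?_
    rw [← EReal.coe_zero, EReal.coe_le_coe_iff]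
    nlinarith [mul_le_mul_of_nonneg_left (h p ⟨not_lt.1 hpq, hp1⟩) hpos.le]

lemma exists_q_aux (μ : Measure Ω) [IsProbabilityMeasure μ] (X : Ω → ℝ) (hX : Integrable X μ) :
    ∃ q ∈ Set.Ioo (0:ℝ) 1, ∀ p ∈ Set.Ico q 1, ∫ r in Set.Ioo p 1, VaRr μ X r ≤ 1 := by
  have hi := VaRr_integrable μ X hX
  have ht : Tendsto (fun p : ℝ => (volume.restrict (Set.Ioo (0:ℝ) 1)) (Set.Ioo p 1))
      (nhdsWithin 1 (Set.Iio 1)) (nhds 0) := by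
    have h1 : Tendsto (fun p : ℝ => ENNReal.ofReal (1 - p)) (nhdsWithin 1 (Set.Iio 1)) (nhds 0) := by
      have : Continuous fun p : ℝ => ENNReal.ofReal (1 - p) :=
        ENNReal.continuous_ofReal.comp (continuous_const.sub continuous_id)
      have h2 := this.tendsto 1
      simp only [sub_self, ENNReal.ofReal_zero] at h2
      exact h2.mono_left nhdsWithin_le_nhds
    refine tendsto_of_tendsto_of_tendsto_of_le_of_le tendsto_const_nhds h1
      (fun _ => bot_le) fun p => ?_
    refine (Measure.restrict_apply_le _ _).trans ?_
    simp
  have h2 := hi.tendsto_setIntegral_nhds_zero ht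
  have h3 := h2.eventually (gt_mem_nhds (zero_lt_one))
  obtain ⟨a, ha, hs⟩ := (mem_nhdsLT_iff_exists_mem_Ico_Ioo_subset (zero_lt_one' ℝ)).1 h3
  refine ⟨max ((a+1)/2) (1/2), ⟨by positivity, max_lt (by linarith [ha.2]) (by norm_num)⟩, fun p hp => ?_⟩
  have hap : a < p := by linarith [ha.2, (le_max_left ((a+1)/2) (1/2)).trans hp.1]
  have h4 := hs ⟨hap, hp.2⟩
  have hp0 : 0 ≤ p := le_trans (by norm_num) ((le_max_right ((a+1)/2) (1/2)).trans hp.1)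
  simp only [Set.mem_setOf_eq] at h4
  rw [Measure.restrict_restrict measurableSet_Ioo, Set.inter_eq_left.2
    (Set.Ioo_subset_Ioo_left hp0)] at h4
  exact h4.le

/-- For the risk profile `g(p) = 1/(1-p)` on `[0,1)` with
`g(1) = ∞`, the adjusted Expected Shortfall is finite on all of `L¹`; moreover
`ES^g(X) ≤ max {ES_q(X), 0}` for any `q ∈ (0,1)` with
`sup_{p ∈ [q,1]} ∫_p^1 VaR_r(X) dr < 1`. -/
theorem stmt17 (μ : Measure Ω) [IsProbabilityMeasure μ] (hatomless : Atomless μ)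
    (g : ℝ → EReal) (hgdef : ∀ p ∈ Set.Ico (0:ℝ) 1, g p = (((1 - p)⁻¹ : ℝ) : EReal))
    (hg1 : g 1 = ⊤) (X : Ω → ℝ) (hX : Integrable X μ) :
    adjES μ g X ≠ ⊤ ∧
    ∀ q ∈ Set.Ioo (0:ℝ) 1,
      sSup ((fun p => ∫ r in Set.Ioo p 1, VaRr μ X r) '' Set.Icc q 1) < 1 →
      adjES μ g X ≤ max (ES μ X q) 0 := by
  refine ⟨?_, ?_⟩
  · obtain ⟨q, hq, h⟩ := exists_q_aux μ X hX
    have h1 := adjES_le_aux μ g hgdef hg1 X hX q hq h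
    refine (h1.trans_lt (max_lt ?_ EReal.zero_lt_top)).ne
    rw [ES, if_neg hq.2.ne]
    exact EReal.coe_lt_top _
  · intro q hq hs
    refine adjES_le_aux μ g hgdef hg1 X hX q hq fun p hp => ?_
    refine le_trans (le_csSup ?_ (Set.mem_image_of_mem
      (fun p => ∫ r in Set.Ioo p 1, VaRr μ X r) (⟨hp.1, hp.2.le⟩ : p ∈ Set.Icc q 1))) hs.le
    have hi := VaRr_integrable μ X hX
    refine ⟨∫ r in Set.Ioo 0 1, |VaRr μ X r|, ?_⟩
    rintro _ ⟨r, hr, rfl⟩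
    have hsub : Set.Ioo r 1 ⊆ Set.Ioo (0:ℝ) 1 := Set.Ioo_subset_Ioo_left (hq.1.le.trans hr.1)
    refine (le_abs_self _).trans (abs_integral_le_integral_abs.trans ?_)
    exact setIntegral_mono_set hi.abs (Eventually.of_forall fun _ => abs_nonneg _)
      hsub.eventuallyLE
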